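/- Let G be the group presented by the generating set S and relation set R of Theorem 2.14 (the presentation of the virtual Thompson group VF) as described in the context. Then G has the unique extraction of roots property: for all a, b ∈ G and every integer n ≥ 1, if aⁿ = bⁿ then a = b. -/

import Mathlib

/-- The alphabet Σ = {x, v}. -/
inductive Letter : Type
  | x | v
deriving DecidableEq

/-- Words on Σ (possibly empty). -/
abbrev Word := List Letter

/-- A target word t ∈ {xx, xv, vx, vv}, encoded as the pair of its two letters. -/
abbrev Tgt := Letter × Letter

/-- The word (of length two) corresponding to a target. -/
def tw (t : Tgt) : Word := [t.1, t.2]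

/-- Index for the three generators of family (i): X_{v→vv}, X_{v→vx}, X_{v→xv}. -/
inductive G1 : Type
  | vv   -- X_{v→vv}
  | vx   -- X_{v→vx}
  | xv   -- X_{v→xv}
deriving DecidableEq

/-- Index for the four kinds of generators of family (iii):
X_{x→vv,u}, X_{x→vx,u}, X_{v→xx,u}, X_{v→xv,u}. -/
inductive G3 : Type
  | xvv  -- X_{x→vv,u}
  | xvx  -- X_{x→vx,u}
  | vxx  -- X_{v→xx,u}
  | vxv  -- X_{v→xv,u}
deriving DecidableEq

/-- The generating set S of the presentation of the virtual Thompson group VF. -/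
inductive Gen : Type
  /-- family (i): X_{v→vv}, X_{v→vx}, X_{v→xv} -/
  | fam1 : G1 → Gen
  /-- family (ii): X_{a, s→t, u} with a ∈ {x,v}, s ∈ {x,v}, t ∈ {xx,xv,vx,vv}, u any word -/
  | fam2 : Letter → Letter → Tgt → Word → Gen
  /-- family (iii): X_{c, u} with c one of x→vv, x→vx, v→xx, v→xv and u a nonempty word -/
  | fam3 : G3 → {u : Word // u ≠ []} → Gen

/-- The corresponding generator of the free group on S. -/
def X (g : Gen) : FreeGroup Gen := FreeGroup.of g

open Letter in
/-- The relators of the presentation of VF (each relation A·B = C·D becomes the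
relator A·B·(C·D)⁻¹). -/
inductive VFRel : FreeGroup Gen → Prop
  /-- (R1) and (R2): for a ∈ {x, v},
  X_{a,s₁→t₁, p s₂ q} X_{a,s₂→t₂, q} = X_{a,s₂→t₂, q} X_{a,s₁→t₁, p t₂ q}. -/
  | r12 (a s₁ s₂ : Letter) (t₁ t₂ : Tgt) (p q : Word) :
      VFRel (X (.fam2 a s₁ t₁ (p ++ [s₂] ++ q)) * X (.fam2 a s₂ t₂ q) *
        (X (.fam2 a s₂ t₂ q) * X (.fam2 a s₁ t₁ (p ++ tw t₂ ++ q)))⁻¹)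
  /-- (R3): X_{x,s→t,q} X_{x→vv, p t q} = X_{x→vv, p s q} X_{v,s→t,q}. -/
  | r3 (s : Letter) (t : Tgt) (p q : Word) :
      VFRel (X (.fam2 x s t q) * X (.fam3 .xvv ⟨p ++ tw t ++ q, by simp [tw]⟩) *
        (X (.fam3 .xvv ⟨p ++ [s] ++ q, by simp⟩) * X (.fam2 v s t q))⁻¹)
  /-- (R4): X_{x,s→t,q} X_{x→vx, p t q} = X_{x→vx, p s q} X_{v,s→t,q}. -/
  | r4 (s : Letter) (t : Tgt) (p q : Word) :
      VFRel (X (.fam2 x s t q) * X (.fam3 .xvx ⟨p ++ tw t ++ q, by simp [tw]⟩) *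
        (X (.fam3 .xvx ⟨p ++ [s] ++ q, by simp⟩) * X (.fam2 v s t q))⁻¹)
  /-- (R5): X_{v,s→t,q} X_{v→xx, p t q} = X_{v→xx, p s q} X_{x,s→t,q}. -/
  | r5 (s : Letter) (t : Tgt) (p q : Word) :
      VFRel (X (.fam2 v s t q) * X (.fam3 .vxx ⟨p ++ tw t ++ q, by simp [tw]⟩) *
        (X (.fam3 .vxx ⟨p ++ [s] ++ q, by simp⟩) * X (.fam2 x s t q))⁻¹)
  /-- (R6): X_{v,s→t,q} X_{v→xv, p t q} = X_{v→xv, p s q} X_{x,s→t,q}. -/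
  | r6 (s : Letter) (t : Tgt) (p q : Word) :
      VFRel (X (.fam2 v s t q) * X (.fam3 .vxv ⟨p ++ tw t ++ q, by simp [tw]⟩) *
        (X (.fam3 .vxv ⟨p ++ [s] ++ q, by simp⟩) * X (.fam2 x s t q))⁻¹)

/-- The set of relators. -/
def VFrels : Set (FreeGroup Gen) := {g | VFRel g}

/-- The virtual Thompson group VF, as the presented group ⟨S | R⟩. -/
abbrev VF := PresentedGroup VFrels

namespace VFP

open scoped Classical

noncomputable section

/-! ### Order isomorphisms of the line, charts, letters -/

abbrev Rule := Letter × Tgt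

abbrev Q := ℝ ≃o ℝ

/-- Clamped chart `[i, i+1] → [0,1]`. -/
def ch (i : ℕ) : ℝ →o ℝ where
  toFun t := max 0 (min 1 (t - i))
  monotone' := by
    intro a b hab
    simp only
    gcongr

lemma ch_apply (i : ℕ) (t : ℝ) : ch i t = max 0 (min 1 (t - i)) := rfl

/-- Expansion homeomorphism. -/
def E (i : ℕ) : Q :=
  StrictMono.orderIsoOfRightInverse (fun t : ℝ => t + max 0 (min 1 (t - i)))
    (by
      intro a b hab
      have : max 0 (min 1 (a - i)) ≤ max 0 (min 1 (b - (i : ℝ))) := by gcongr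
      simp only
      linarith)
    (fun s => s - max 0 (min 1 ((s - i) / 2)))
    (by
      intro s
      simp only [max_def, min_def]
      split_ifs <;> linarith)

lemma E_apply (i : ℕ) (t : ℝ) : E i t = t + max 0 (min 1 (t - i)) := rfl

lemma E_inv_apply (i : ℕ) (s : ℝ) : (E i)⁻¹ s = s - max 0 (min 1 ((s - i) / 2)) := rfl

lemma E_comm {i j : ℕ} (h : i < j) : E (j + 1) * E i = E i * E j := by
  have h' : (i : ℝ) + 1 ≤ j := by exact_mod_cast h
  ext t
  simp only [RelIso.mul_apply, E_apply, max_def, min_def]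
  push_cast
  split_ifs <;> linarith

lemma ch_E_right {i j : ℕ} (h : i < j) (t : ℝ) : ch (j + 1) (E i t) = ch j t := by
  have h' : (i : ℝ) + 1 ≤ j := by exact_mod_cast h
  simp only [ch_apply, E_apply, max_def, min_def]
  push_cast
  split_ifs <;> linarith

lemma ch_E_left {i j : ℕ} (h : i < j) (t : ℝ) : ch i (E j t) = ch i t := by
  have h' : (i : ℝ) + 1 ≤ j := by exact_mod_cast h
  simp only [ch_apply, E_apply, max_def, min_def]
  split_ifs <;> linarith

abbrev V := (ℝ →o ℝ) × Rule

/-- Action of `Q` on letters. -/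
def av (f : Q) (u : V) : V := (u.1.comp (f⁻¹ : Q).toOrderEmbedding.toOrderHom, u.2)

lemma av_fst (f : Q) (u : V) (t : ℝ) : (av f u).1 t = u.1 (f⁻¹ t) := rfl
lemma av_snd (f : Q) (u : V) : (av f u).2 = u.2 := rfl

lemma V_ext {u w : V} (h : ∀ t, u.1 t = w.1 t) (h2 : u.2 = w.2) : u = w :=
  Prod.ext (OrderHom.ext _ _ (funext h)) h2

lemma av_one (u : V) : av 1 u = u := rfl

lemma av_mul (f g : Q) (u : V) : av (f * g) u = av f (av g u) := by
  apply V_ext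
  · intro t; simp only [av_fst, mul_inv_rev, RelIso.mul_apply]
  · rfl

lemma av_inj {f : Q} {u w : V} (h : av f u = av f w) : u = w := by
  have := congrArg (av f⁻¹) h
  simpa only [← av_mul, inv_mul_cancel, av_one] using this

lemma av_pow_fix {f : Q} {u : V} {m : ℕ} (hm : 0 < m) (h : av (f ^ m) u = u) : av f u = u := by
  have key : ∀ t, u.1 t = u.1 ((f ^ m) t) := by
    intro t
    have := congrArg (fun w : V => w.1 ((f ^ m) t)) h
    simp only [av_fst] at this
    rw [← this, ← RelIso.mul_apply]; simp
  have main : ∀ t, u.1 (f t) = u.1 t := by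
    intro t
    rcases le_total t (f t) with hl | hl
    · have hmono : Monotone fun n : ℕ => (f ^ n) t := by
        apply monotone_nat_of_le_succ
        intro n
        rw [pow_succ, RelIso.mul_apply]
        exact (f ^ n).monotone hl
      have h1 : f t ≤ (f ^ m) t := by simpa using hmono (show 1 ≤ m from hm)
      exact le_antisymm ((u.1.monotone h1).trans (key t).ge) (u.1.monotone hl)
    · have hmono : Antitone fun n : ℕ => (f ^ n) t := by
        apply antitone_nat_of_succ_le
        intro n
        rw [pow_succ, RelIso.mul_apply]
        exact (f ^ n).monotone hl
      have h1 : (f ^ m) t ≤ f t := by simpa using hmono (show 1 ≤ m from hm)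
      exact le_antisymm (u.1.monotone hl) ((key t).le.trans (u.1.monotone h1))
  refine V_ext (fun t => ?_) rfl
  rw [av_fst, ← main, ← RelIso.mul_apply]; simp

/-- Commutation of letters: distinct with disjoint supports. -/
def cm (u w : V) : Prop :=
  u ≠ w ∧ ∀ t, ¬ ((0 < u.1 t ∧ u.1 t < 1) ∧ (0 < w.1 t ∧ w.1 t < 1))

lemma cm_symm {u w : V} (h : cm u w) : cm w u :=
  ⟨h.1.symm, fun t ht => h.2 t ⟨ht.2, ht.1⟩⟩

lemma cm_av {u w : V} (f : Q) (h : cm u w) : cm (av f u) (av f w) :=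
  ⟨fun e => h.1 (av_inj e), fun t ht => h.2 (f⁻¹ t) ht⟩

/-! ### The trace monoid and its algebra -/

def rel (a b : FreeMonoid V) : Prop :=
  ∃ u w, cm u w ∧ a = FreeMonoid.of u * FreeMonoid.of w ∧ b = FreeMonoid.of w * FreeMonoid.of u

abbrev T := PresentedMonoid rel

def tof (u : V) : T := PresentedMonoid.of rel u

lemma tof_comm {u w : V} (h : cm u w) : tof u * tof w = tof w * tof u := by
  have := PresentedMonoid.mk_eq_mk_of_rel (rels := rel) ⟨u, w, h, rfl, rfl⟩
  simpa [tof, PresentedMonoid.of, map_mul] using this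

def tmap (f : Q) : T →* T :=
  PresentedMonoid.lift (fun u => tof (av f u)) (by
    rintro a b ⟨u, w, h, rfl, rfl⟩
    simp only [map_mul, FreeMonoid.lift_eval_of]
    exact tof_comm (cm_av f h))

lemma tmap_tof (f : Q) (u : V) : tmap f (tof u) = tof (av f u) := rfl

lemma tmap_one : tmap 1 = MonoidHom.id T :=
  PresentedMonoid.ext rel fun _ => rfl

lemma tmap_mul (f g : Q) : tmap (f * g) = (tmap f).comp (tmap g) :=
  PresentedMonoid.ext rel fun u => by
    change tmap (f * g) (tof u) = tmap f (tmap g (tof u))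
    simp only [tmap_tof, av_mul]

/-- Content of a trace. -/
def cont : T →* Multiplicative (Multiset V) :=
  PresentedMonoid.lift (fun u => Multiplicative.ofAdd {u}) (by
    rintro a b ⟨u, w, h, rfl, rfl⟩
    simp only [map_mul, FreeMonoid.lift_eval_of]
    exact mul_comm _ _)

def tl (l : List V) : T := (l.map tof).prod

lemma tl_surj (t : T) : ∃ l, t = tl l := by
  obtain ⟨a, rfl⟩ := PresentedMonoid.surjective_mk t
  refine ⟨a.toList, ?_⟩
  induction a with
  | one => rfl
  | of x => simp [tl, tof, PresentedMonoid.of]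
  | mul x y hx hy => simp_all [tl]

lemma cont_tl (l : List V) : (cont (tl l)).toAdd = (l : Multiset V) := by
  induction l with
  | nil => rfl
  | cons a l ih =>
    have : cont (tl (a :: l)) = cont (tof a) * cont (tl l) := by simp [tl]
    rw [this, toAdd_mul, ih]
    change ({a} : Multiset V) + _ = _
    rfl

lemma tmap_tl (f : Q) (l : List V) : tmap f (tl l) = tl (l.map (av f)) := by
  simp [tl, map_list_prod, Function.comp_def, tmap_tof]

lemma av_fix_of_finite {f : Q} {m : ℕ} (hm : 0 < m) {u : V} {S : Set V} (hS : S.Finite)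
    (h : ∀ j : ℕ, av (f ^ (m * j)) u ∈ S) : av f u = u := by
  have : ¬ Function.Injective (fun j : ℕ => av (f ^ (m * j)) u) := by
    intro hi
    exact Set.infinite_range_of_injective hi (hS.subset (by rintro _ ⟨j, rfl⟩; exact h j))
  simp only [Function.Injective, not_forall] at this
  obtain ⟨i, j, hij, hne⟩ := this
  wlog hlt : i < j generalizing i j
  · exact this j i hij.symm (Ne.symm hne) (by omega)
  obtain ⟨k, rfl⟩ := Nat.exists_eq_add_of_lt hlt
  have e : f ^ (m * (i + k + 1)) = f ^ (m * i) * f ^ (m * (k + 1)) := by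
    rw [← pow_add]; congr 1; ring
  rw [e, av_mul] at hij
  exact av_pow_fix (m := m * (k + 1)) (by positivity) (av_inj hij).symm

lemma tmap_pow_fix {f : Q} {t : T} {m : ℕ} (hm : 0 < m) (h : tmap (f ^ m) t = t) :
    tmap f t = t := by
  obtain ⟨l, rfl⟩ := tl_surj t
  have hj : ∀ j : ℕ, tmap (f ^ (m * j)) (tl l) = tl l := by
    intro j
    induction j with
    | zero => simp [tmap_one]
    | succ j ih => rw [mul_add, mul_one, pow_add, tmap_mul, MonoidHom.comp_apply, h, ih]
  have hfix : ∀ u ∈ l, av f u = u := by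
    intro u hu
    refine av_fix_of_finite hm (S := {x | x ∈ l}) (List.finite_toSet l) ?_
    intro j
    have := congrArg (fun t => (cont t).toAdd) (hj j)
    simp only [tmap_tl, cont_tl] at this
    have hmem : av (f ^ (m * j)) u ∈ ((l.map (av (f ^ (m * j))) : List V) : Multiset V) := by
      simp only [Multiset.mem_coe, List.mem_map]; exact ⟨u, hu, rfl⟩
    rw [this] at hmem
    simpa using hmem
  rw [tmap_tl, List.map_congr_left hfix, List.map_id']

abbrev A := MonoidAlgebra ℤ T

def amap (f : Q) : A →+* A := MonoidAlgebra.mapDomainRingHom ℤ (tmap f)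

lemma amap_one : amap 1 = RingHom.id A := by
  rw [amap, tmap_one]; exact MonoidAlgebra.mapDomainRingHom_id

lemma amap_mul (f g : Q) : amap (f * g) = (amap f).comp (amap g) := by
  rw [amap, tmap_mul]; exact MonoidAlgebra.mapDomainRingHom_comp _ _

lemma tmap_inj (f : Q) : Function.Injective (tmap f) := by
  intro a b h
  have := congrArg (tmap f⁻¹) h
  simpa only [← MonoidHom.comp_apply, ← tmap_mul, inv_mul_cancel, tmap_one,
    MonoidHom.id_apply] using this

lemma amap_coeff (f : Q) (k : A) (t : T) : (amap f k).coeff (tmap f t) = k.coeff t := by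
  exact Finsupp.mapDomain_apply (tmap_inj f) _ _

lemma amap_sum_zero {f : Q} {n : ℕ} (hn : 0 < n) {k : A}
    (h : ∑ i ∈ Finset.range n, amap (f ^ i) k = 0) : k = 0 := by
  have hfn : amap (f ^ n) k = k := by
    have h1 := congrArg (amap f) h
    simp only [map_sum, map_zero, ← RingHom.comp_apply, ← amap_mul, ← pow_succ'] at h1
    have h2 := Finset.sum_range_succ' (fun i => amap (f ^ i) k) n
    rw [Finset.sum_range_succ, h, h1] at h2
    simpa [amap_one] using h2
  have hj : ∀ (j : ℕ), amap (f ^ (n * j)) k = k := by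
    intro j
    induction j with
    | zero => simp [amap_one]
    | succ j ih => rw [mul_add, mul_one, pow_add, amap_mul, RingHom.comp_apply, hfn, ih]
  have hfix : ∀ t, k.coeff t ≠ 0 → tmap f t = t := by
    intro t ht
    have hmem : ∀ j : ℕ, tmap (f ^ (n * j)) t ∈ k.coeff.support := by
      intro j
      rw [Finsupp.mem_support_iff]
      rw [← hj j, amap_coeff]; exact ht
    have : ¬ Function.Injective (fun j : ℕ => tmap (f ^ (n * j)) t) := by
      intro hi
      exact Set.infinite_range_of_injective hi (k.coeff.support.finite_toSet.subset
        (by rintro _ ⟨j, rfl⟩; exact hmem j))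
    simp only [Function.Injective, not_forall] at this
    obtain ⟨i, j, hij, hne⟩ := this
    wlog hlt : i < j generalizing i j
    · exact this j i hij.symm (Ne.symm hne) (by omega)
    obtain ⟨k, rfl⟩ := Nat.exists_eq_add_of_lt hlt
    have e : f ^ (n * (i + k + 1)) = f ^ (n * i) * f ^ (n * (k + 1)) := by
      rw [← pow_add]; congr 1; ring
    rw [e, tmap_mul] at hij
    exact tmap_pow_fix (m := n * (k + 1)) (by positivity) (tmap_inj _ hij).symm
  have hfi : ∀ (i : ℕ) t, k.coeff t ≠ 0 → tmap (f ^ i) t = t := by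
    intro i t ht
    induction i with
    | zero => simp [tmap_one]
    | succ i ih => rw [pow_succ, tmap_mul, MonoidHom.comp_apply, hfix t ht, ih]
  by_contra hk
  have : ∃ t, k.coeff t ≠ 0 := by
    by_contra! hc
    exact hk (MonoidAlgebra.ext (Finsupp.ext fun t => by simpa using hc t))
  obtain ⟨t, ht⟩ := this
  have h3 : ∀ i ∈ Finset.range n, (amap (f ^ i) k).coeff t = k.coeff t := by
    intro i _
    conv_lhs => rw [← hfi i t ht]
    exact amap_coeff _ _ _
  have h4 := congrArg (fun a : A => a.coeff t) h
  simp only [MonoidAlgebra.coeff_sum, Finsupp.finsetSum_apply, MonoidAlgebra.coeff_zero,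
    Finsupp.zero_apply] at h4
  rw [Finset.sum_congr rfl h3] at h4
  simp only [Finset.sum_const, Finset.card_range, nsmul_eq_mul, mul_eq_zero] at h4
  rcases h4 with h4 | h4
  · have : n = 0 := by exact_mod_cast h4
    omega
  · exact ht h4

/-! ### Power series and the semidirect product -/

abbrev PS := PowerSeries A

def pmap (f : Q) : PS →+* PS := PowerSeries.map (amap f)

lemma pmap_one : pmap 1 = RingHom.id PS := by
  rw [pmap, amap_one]; ext1 x; exact congrFun PowerSeries.map_id x

lemma pmap_mul (f g : Q) : pmap (f * g) = (pmap f).comp (pmap g) := by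
  rw [pmap, amap_mul]; exact PowerSeries.map_comp _ _

abbrev NN := PSˣ

def nact : Q →* MulAut NN where
  toFun f :=
    { toFun := Units.map (pmap f : PS →* PS)
      invFun := Units.map (pmap f⁻¹ : PS →* PS)
      left_inv := fun x => by
        ext1
        change pmap f⁻¹ (pmap f x) = x
        rw [← RingHom.comp_apply, ← pmap_mul, inv_mul_cancel, pmap_one]; rfl
      right_inv := fun x => by
        ext1
        change pmap f (pmap f⁻¹ x) = x
        rw [← RingHom.comp_apply, ← pmap_mul, mul_inv_cancel, pmap_one]; rfl
      map_mul' := fun x y => map_mul _ x y }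
  map_one' := by
    ext x : 2
    change pmap 1 x = x
    rw [pmap_one]; rfl
  map_mul' f g := by
    ext x : 2
    change pmap (f * g) x = pmap f (pmap g x)
    rw [pmap_mul]; rfl

lemma nact_coe (f : Q) (x : NN) : ((nact f x : NN) : PS) = pmap f x := rfl

abbrev TT := NN ⋊[nact] Q

def lin (a : A) : PS := 1 + PowerSeries.C a * PowerSeries.X

lemma constCoeff_lin (a : A) : PowerSeries.constantCoeff (lin a) = 1 := by
  simp [lin]

def unitLin (a : A) : NN where
  val := lin a
  inv := PowerSeries.invOfUnit (lin a) 1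
  val_inv := PowerSeries.mul_invOfUnit _ _ (constCoeff_lin a)
  inv_val := PowerSeries.invOfUnit_mul _ _ (constCoeff_lin a)

def ta (u : V) : A := MonoidAlgebra.of ℤ T (tof u)

def U (u : V) : NN := unitLin (ta u)

lemma amap_ta (f : Q) (u : V) : amap f (ta u) = ta (av f u) := by
  simp [ta, amap, tmap_tof]

lemma nact_U (f : Q) (u : V) : nact f (U u) = U (av f u) := by
  ext1
  rw [nact_coe]
  simp [U, unitLin, lin, pmap, amap_ta]

lemma lin_commute {a b : A} (h : a * b = b * a) : lin a * lin b = lin b * lin a := by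
  have hC : Commute (PowerSeries.C a : PS) (PowerSeries.C b) := by
    rw [Commute, SemiconjBy, ← map_mul, h, map_mul]
  have h1 : Commute (PowerSeries.C a * PowerSeries.X : PS) (PowerSeries.C b * PowerSeries.X) := by
    apply Commute.mul_left
    · exact hC.mul_right (PowerSeries.commute_X _)
    · exact (PowerSeries.commute_X _).symm
  exact ((Commute.one_left _).add_left ((Commute.one_right _).add_right h1)).eq

lemma U_comm {u w : V} (h : cm u w) : U u * U w = U w * U u := by
  ext1
  apply lin_commute
  simp only [ta, ← map_mul, tof_comm h]

/-- The value of an expansion edge. -/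
def ev (i : ℕ) (r : Rule) : TT := ⟨U (ch i, r), (E i)⁻¹⟩

lemma ch_av_right {i j : ℕ} (h : i < j) (r : Rule) : av (E i)⁻¹ (ch (j + 1), r) = (ch j, r) :=
  V_ext (fun t => by rw [av_fst, inv_inv]; exact ch_E_right h t) rfl

lemma ch_av_left {i j : ℕ} (h : i < j) (r : Rule) : av (E j)⁻¹ (ch i, r) = (ch i, r) :=
  V_ext (fun t => by rw [av_fst, inv_inv]; exact ch_E_left h t) rfl

lemma cm_ch {i j : ℕ} (h : i < j) (r r' : Rule) : cm (ch i, r) (ch j, r') := by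
  have h' : (i : ℝ) + 1 ≤ j := by exact_mod_cast h
  have key : ∀ t, ¬ ((0 < ch i t ∧ ch i t < 1) ∧ (0 < ch j t ∧ ch j t < 1)) := by
    rintro t ⟨⟨h1, h2⟩, h3, h4⟩
    simp only [ch_apply, max_def, min_def] at h1 h2 h3 h4
    split_ifs at * <;> linarith
  refine ⟨fun e => ?_, key⟩
  have e1 : ch i = ch j := congrArg Prod.fst e
  have e2 : ch i ((i : ℝ) + 1 / 2) = 1 / 2 := by
    rw [ch_apply]; norm_num
  apply key ((i : ℝ) + 1 / 2)
  rw [← e1, e2]; norm_num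

lemma ev_comm {i j : ℕ} (h : i < j) (r1 r2 : Rule) :
    ev i r1 * ev (j + 1) r2 = ev j r2 * ev i r1 := by
  refine SemidirectProduct.ext ?_ ?_
  · simp only [ev, SemidirectProduct.mul_left, nact_U, ch_av_right h, ch_av_left h]
    exact U_comm (cm_ch h _ _)
  · simp only [ev, SemidirectProduct.mul_right, ← mul_inv_rev, E_comm h]

/-! ### Unique roots for germ-linear order isomorphisms -/

def PL (f : Q) : Prop :=
  (∀ t ≤ 0, f t = t) ∧
    ∀ a, ∃ ε > 0, ∃ m > 0, ∀ t, a ≤ t → t ≤ a + ε → f t = f a + m * (t - a)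

lemma PL_one : PL 1 :=
  ⟨fun _ _ => rfl, fun a => ⟨1, one_pos, 1, one_pos, fun t _ _ => by simp⟩⟩

lemma PL_mul {f g : Q} (hf : PL f) (hg : PL g) : PL (f * g) := by
  refine ⟨fun t ht => by rw [RelIso.mul_apply, hg.1 t ht, hf.1 t ht], fun a => ?_⟩
  obtain ⟨ε, hε, m, hm, h⟩ := hg.2 a
  obtain ⟨ε', hε', m', hm', h'⟩ := hf.2 (g a)
  refine ⟨min ε (ε' / m), by positivity, m' * m, by positivity, fun t h1 h2 => ?_⟩
  have h3 : t ≤ a + ε := h2.trans (by gcongr; exact min_le_left _ _)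
  have h4 : t ≤ a + ε' / m := h2.trans (by gcongr; exact min_le_right _ _)
  have h5 : m * (t - a) ≤ ε' := by
    have : t - a ≤ ε' / m := by linarith
    rw [le_div_iff₀ hm] at this
    linarith
  have h6 : 0 ≤ m * (t - a) := mul_nonneg hm.le (by linarith)
  rw [RelIso.mul_apply, RelIso.mul_apply, h t h1 h3, h' _ (by linarith) (by linarith)]
  ring

lemma inv_apply_self' (f : Q) (t : ℝ) : f⁻¹ (f t) = t := by
  rw [← RelIso.mul_apply]; simp

lemma apply_inv_self' (f : Q) (t : ℝ) : f (f⁻¹ t) = t := by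
  rw [← RelIso.mul_apply]; simp

lemma PL_inv {f : Q} (hf : PL f) : PL f⁻¹ := by
  refine ⟨fun t ht => ?_, fun b => ?_⟩
  · conv_lhs => rw [← hf.1 t ht]
    exact inv_apply_self' f t
  · obtain ⟨ε, hε, m, hm, h⟩ := hf.2 (f⁻¹ b)
    refine ⟨m * ε, by positivity, m⁻¹, by positivity, fun t h1 h2 => ?_⟩
    have h0 : 0 ≤ m⁻¹ * (t - b) := mul_nonneg (by positivity) (by linarith)
    have h3 : m⁻¹ * (t - b) ≤ ε := by
      rw [inv_mul_le_iff₀ hm]; linarith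
    have := h (f⁻¹ b + m⁻¹ * (t - b)) (by linarith) (by linarith)
    rw [apply_inv_self'] at this
    have e : b + m * (f⁻¹ b + m⁻¹ * (t - b) - f⁻¹ b) = t := by field_simp; ring
    rw [e] at this
    rw [← inv_apply_self' f (f⁻¹ b + m⁻¹ * (t - b)), this]

lemma PL_E (i : ℕ) : PL (E i) := by
  have hi : (0 : ℝ) ≤ i := Nat.cast_nonneg i
  refine ⟨fun t ht => ?_, fun a => ?_⟩
  · rw [E_apply, max_eq_left]
    · ring
    · exact (min_le_right _ _).trans (by linarith)
  · simp only [E_apply]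
    rcases lt_or_ge a i with h | h
    · refine ⟨i - a, by linarith, 1, one_pos, fun t h1 h2 => ?_⟩
      simp only [max_def, min_def]
      split_ifs <;> linarith
    rcases lt_or_ge a (i + 1) with h' | h'
    · refine ⟨i + 1 - a, by linarith, 2, two_pos, fun t h1 h2 => ?_⟩
      simp only [max_def, min_def]
      split_ifs <;> linarith
    · refine ⟨1, one_pos, 1, one_pos, fun t h1 h2 => ?_⟩
      simp only [max_def, min_def]
      split_ifs <;> linarith

lemma fix_pow_slope {f : Q} {a m : ℝ} (hm : 0 < m) (ha : f a = a) {ε : ℝ} (hε : 0 < ε)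
    (h : ∀ t, a ≤ t → t ≤ a + ε → f t = f a + m * (t - a)) (n : ℕ) :
    ∃ ε > 0, ∀ t, a ≤ t → t ≤ a + ε → (f ^ n) t = a + m ^ n * (t - a) := by
  induction n with
  | zero => exact ⟨1, one_pos, fun t _ _ => by simp⟩
  | succ n ih =>
    obtain ⟨δ, hδ, ih⟩ := ih
    refine ⟨min δ (ε / m ^ n), by positivity, fun t h1 h2 => ?_⟩
    have h3 : t ≤ a + δ := h2.trans (by gcongr; exact min_le_left _ _)
    have h4 : t ≤ a + ε / m ^ n := h2.trans (by gcongr; exact min_le_right _ _)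
    have h5 : m ^ n * (t - a) ≤ ε := by
      have : t - a ≤ ε / m ^ n := by linarith
      rw [le_div_iff₀ (by positivity)] at this
      linarith
    have h6 : 0 ≤ m ^ n * (t - a) := mul_nonneg (by positivity) (by linarith)
    rw [pow_succ', RelIso.mul_apply, ih t h1 h3, h _ (by linarith) (by linarith), ha]
    ring

lemma fix_of_pow_fix {f : Q} {a : ℝ} {n : ℕ} (hn : 0 < n) (h : (f ^ n) a = a) : f a = a := by
  rcases lt_trichotomy a (f a) with hl | hl | hl
  · have hmono : StrictMono fun n : ℕ => (f ^ n) a := by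
      apply strictMono_nat_of_lt_succ
      intro n
      rw [pow_succ, RelIso.mul_apply]
      exact (f ^ n).strictMono hl
    have := hmono hn
    simp [h] at this
  · exact hl.symm
  · have hmono : StrictAnti fun n : ℕ => (f ^ n) a := by
      apply strictAnti_nat_of_succ_lt
      intro n
      rw [pow_succ, RelIso.mul_apply]
      exact (f ^ n).strictMono hl
    have := hmono hn
    simp [h] at this

lemma PL_roots {f g : Q} (hf : PL f) (hg : PL g) {n : ℕ} (hn : 0 < n) (h : f ^ n = g ^ n) :
    f = g := by
  by_contra hne
  have hex : ∃ t, f t ≠ g t := by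
    by_contra! hc
    exact hne (RelIso.ext hc)
  set S := {t | f t ≠ g t} with hS
  have hbdd : BddBelow S := ⟨0, fun t ht => by
    by_contra hlt
    exact ht ((hf.1 t (by linarith)).trans (hg.1 t (by linarith)).symm)⟩
  set a := sInf S with ha
  have hlow : ∀ t < a, f t = g t := by
    intro t ht
    by_contra hc
    exact absurd (csInf_le hbdd hc) (not_le.mpr ht)
  -- it suffices to show agreement on a right neighbourhood of a
  suffices hsuf : ∃ ε > 0, ∀ t, a ≤ t → t ≤ a + ε → f t = g t by
    obtain ⟨ε, hε, hh⟩ := hsuf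
    have : a + ε ≤ a := by
      apply le_csInf hex
      intro t ht
      by_contra hlt
      rcases lt_or_ge t a with h1 | h1
      · exact ht (hlow t h1)
      · exact ht (hh t h1 (by linarith))
    linarith
  set k := f ^ n with hk
  have cf : ∀ t, f (k t) = k (f t) := fun t => by
    rw [← RelIso.mul_apply, ← RelIso.mul_apply, hk, ← pow_succ', ← pow_succ]
  have cg : ∀ t, g (k t) = k (g t) := fun t => by
    rw [← RelIso.mul_apply, ← RelIso.mul_apply, h, ← pow_succ', ← pow_succ]
  rcases lt_trichotomy (k a) a with hl | hl | hl
  · -- k a < a: near a, k t < a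
    obtain ⟨t0, h1, h2⟩ : ∃ t0, a < t0 ∧ k t0 < a := by
      refine ⟨k⁻¹ ((k a + a) / 2), ?_, ?_⟩
      · apply k.lt_iff_lt.mp
        rw [apply_inv_self']; linarith
      · rw [apply_inv_self']; linarith
    refine ⟨t0 - a, by linarith, fun t h3 h4 => ?_⟩
    have : k t < a := (k.monotone (show t ≤ t0 by linarith)).trans_lt h2
    have e := hlow _ this
    rw [cf, cg] at e
    exact k.injective e
  · -- fixed point
    have fa : f a = a := fix_of_pow_fix hn hl
    have ga : g a = a := fix_of_pow_fix hn (by rw [← h]; exact hl)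
    obtain ⟨ε, hε, m, hm, h1⟩ := hf.2 a
    obtain ⟨ε', hε', m', hm', h1'⟩ := hg.2 a
    obtain ⟨δ, hδ, h2⟩ := fix_pow_slope hm fa hε h1 n
    obtain ⟨δ', hδ', h2'⟩ := fix_pow_slope hm' ga hε' h1' n
    have hmm : m = m' := by
      have e1 := h2 (a + min δ δ') (by linarith [lt_min hδ hδ']) (by gcongr; exact min_le_left _ _)
      have e2 := h2' (a + min δ δ') (by linarith [lt_min hδ hδ'])
        (by gcongr; exact min_le_right _ _)
      rw [← h] at e2
      rw [e1] at e2
      have hpos := lt_min hδ hδ'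
      have : m ^ n = m' ^ n := by
        have e3 : m ^ n * min δ δ' = m' ^ n * min δ δ' := by
          have : a + min δ δ' - a = min δ δ' := by ring
          rw [this] at e2; linarith
        exact mul_right_cancel₀ hpos.ne' e3
      exact (pow_left_inj₀ hm.le hm'.le hn.ne').mp this
    refine ⟨min ε ε', lt_min hε hε', fun t h3 h4 => ?_⟩
    rw [h1 t h3 (h4.trans (by gcongr; exact min_le_left _ _)),
      h1' t h3 (h4.trans (by gcongr; exact min_le_right _ _)), fa, ga, hmm]
  · -- a < k a: near a, k⁻¹ t < a
    refine ⟨(k a - a) / 2, by linarith, fun t h3 h4 => ?_⟩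
    have : k⁻¹ t < a := by
      apply k.lt_iff_lt.mp
      rw [apply_inv_self']; linarith
    have e := congrArg k (hlow _ this)
    rw [← cf, ← cg, apply_inv_self'] at e
    exact e

/-! ### Unique roots in the good subgroup -/

lemma constCoeff_pmap (f : Q) (x : PS) :
    PowerSeries.constantCoeff (pmap f x) = amap f (PowerSeries.constantCoeff x) := by
  rw [← PowerSeries.coeff_zero_eq_constantCoeff_apply,
    ← PowerSeries.coeff_zero_eq_constantCoeff_apply]
  exact PowerSeries.coeff_map _ _ _

def Good : Subgroup TT where
  carrier := {x | PowerSeries.constantCoeff (x.left : PS) = 1 ∧ PL x.right}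
  one_mem' := ⟨by simp, PL_one⟩
  mul_mem' := by
    rintro x y ⟨h1, h2⟩ ⟨h3, h4⟩
    refine ⟨?_, PL_mul h2 h4⟩
    simp [nact_coe, constCoeff_pmap, h1, h3]
  inv_mem' := by
    rintro x ⟨h1, h2⟩
    refine ⟨?_, PL_inv h2⟩
    rw [SemidirectProduct.inv_left, nact_coe]
    have : PowerSeries.constantCoeff ((x.left⁻¹ : NN) : PS) = 1 := by
      have := congrArg PowerSeries.constantCoeff x.left.mul_inv
      rw [map_mul, h1, one_mul, map_one] at this
      exact this
    simp [constCoeff_pmap, this]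

lemma ev_good (i : ℕ) (r : Rule) : ev i r ∈ Good :=
  ⟨constCoeff_lin _, PL_inv (PL_E i)⟩

lemma pow_left_coe (a : TT) (n : ℕ) :
    ((a ^ n).left : PS) = ((List.range n).map fun i => pmap (a.right ^ i) a.left).prod := by
  induction n with
  | zero => simp
  | succ n ih =>
    have hr : (a ^ n).right = a.right ^ n := map_pow SemidirectProduct.rightHom a n
    rw [pow_succ, SemidirectProduct.mul_left, Units.val_mul, ih, nact_coe, hr,
      List.range_succ, List.map_append, List.prod_append]
    simp

lemma prod_perturb {d : ℕ} (hd : 0 < d) (x y z : ℕ → PS)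
    (hx : ∀ i, x i = y i + PowerSeries.X ^ d * z i)
    (hy : ∀ i, PowerSeries.constantCoeff (y i) = 1) (n : ℕ) :
    ∃ Z : PS, ((List.range n).map x).prod = ((List.range n).map y).prod + PowerSeries.X ^ d * Z ∧
      PowerSeries.constantCoeff Z = ∑ i ∈ Finset.range n, PowerSeries.constantCoeff (z i) ∧
      PowerSeries.constantCoeff ((List.range n).map y).prod = 1 := by
  induction n with
  | zero => exact ⟨0, by simp, by simp, by simp⟩
  | succ n ih =>
    obtain ⟨Z, h1, h2, h3⟩ := ih
    simp only [List.range_succ, List.map_append, List.prod_append, List.map_cons, List.map_nil,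
      List.prod_cons, List.prod_nil, mul_one]
    set Y := ((List.range n).map y).prod
    refine ⟨Y * z n + Z * y n + Z * (PowerSeries.X ^ d * z n), ?_, ?_, ?_⟩
    · rw [h1, hx n]
      have c1 : Y * (PowerSeries.X ^ d * z n) = PowerSeries.X ^ d * (Y * z n) := by
        rw [← mul_assoc, (PowerSeries.commute_X_pow Y d).eq, mul_assoc]
      rw [add_mul, mul_add, mul_add, c1, mul_add, mul_add]
      simp only [mul_assoc, add_assoc]
    · simp [h2, h3, hy, Finset.sum_range_succ, hd.ne', add_comm]
    · rw [map_mul, h3, hy, one_mul]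

lemma good_roots {a b : TT} (ha : a ∈ Good) (hb : b ∈ Good) {n : ℕ} (hn : 0 < n)
    (h : a ^ n = b ^ n) : a = b := by
  have hr : a.right = b.right := by
    refine PL_roots ha.2 hb.2 hn ?_
    have := congrArg SemidirectProduct.rightHom h
    rw [map_pow, map_pow] at this
    exact this
  refine SemidirectProduct.ext ?_ hr
  ext1
  by_contra hne
  have hex : ∃ d, PowerSeries.coeff d (a.left : PS) ≠ PowerSeries.coeff d (b.left : PS) := by
    by_contra! hc
    exact hne (PowerSeries.ext hc)
  set d := Nat.find hex with hd
  have hdne := Nat.find_spec hex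
  have hdmin : ∀ m < d, PowerSeries.coeff m (a.left : PS) = PowerSeries.coeff m (b.left : PS) :=
    fun m hm => not_not.mp (Nat.find_min hex hm)
  have hd0 : 0 < d := by
    rw [Nat.pos_iff_ne_zero]
    intro h0
    apply hdne
    rw [← hd, h0, PowerSeries.coeff_zero_eq_constantCoeff_apply,
      PowerSeries.coeff_zero_eq_constantCoeff_apply, ha.1, hb.1]
  obtain ⟨z, hz⟩ : ∃ z, (a.left : PS) - (b.left : PS) = PowerSeries.X ^ d * z :=
    PowerSeries.X_pow_dvd_iff.mpr (fun m hm => by rw [map_sub, hdmin m hm, sub_self])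
  have hz0 : PowerSeries.constantCoeff z ≠ 0 := by
    intro h0
    apply hdne
    have := congrArg (PowerSeries.coeff d) hz
    rw [map_sub, PowerSeries.coeff_X_pow_mul', if_pos le_rfl, Nat.sub_self,
      PowerSeries.coeff_zero_eq_constantCoeff_apply, h0, sub_eq_zero] at this
    exact this
  have hab : (a.left : PS) = (b.left : PS) + PowerSeries.X ^ d * z := by rw [← hz]; abel
  obtain ⟨Z, h1, h2, -⟩ := prod_perturb hd0 (fun i => pmap (a.right ^ i) a.left)
    (fun i => pmap (a.right ^ i) b.left) (fun i => pmap (a.right ^ i) z)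
    (fun i => by rw [hab]; simp [pmap]) (fun i => by rw [constCoeff_pmap, hb.1, map_one]) n
  have h3 : ((a ^ n).left : PS) = ((b ^ n).left : PS) := by rw [h]
  rw [pow_left_coe, pow_left_coe, ← hr, h1] at h3
  have h4 : PowerSeries.X ^ d * Z = 0 := by simpa using h3
  have h5 : PowerSeries.constantCoeff Z = 0 := by
    have := congrArg (PowerSeries.coeff d) h4
    rwa [PowerSeries.coeff_X_pow_mul', if_pos le_rfl, Nat.sub_self,
      PowerSeries.coeff_zero_eq_constantCoeff_apply, map_zero] at this
  rw [h5] at h2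
  apply hz0
  apply amap_sum_zero (f := a.right) hn
  rw [h2]
  apply Finset.sum_congr rfl
  intro i _
  exact (constCoeff_pmap _ _).symm


/-! ### Nonvanishing of reduced products -/

/-- Left quotient of a word by a letter, modulo commutations. -/
def lquot (v : V) : List V → Option (List V)
  | [] => none
  | u :: l => if u = v then some l else
      if cm v u then (lquot v l).map (fun l' => u :: l') else none

lemma lquot_cons_self (v : V) (l : List V) : lquot v (v :: l) = some l := by simp [lquot]

lemma lquot_K {v w : V} (h : cm v w) : ∀ (l l1 : List V), lquot v l = some l1 →
    (lquot w l = none → lquot w l1 = none) ∧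
    (∀ l2, lquot w l = some l2 → ∃ l3, lquot w l1 = some l3 ∧ lquot v l2 = some l3) := by
  intro l
  induction l with
  | nil => intro l1 h1; simp [lquot] at h1
  | cons u l ih =>
    intro l1 h1
    by_cases huv : u = v
    · subst huv
      rw [lquot_cons_self] at h1
      obtain rfl := Option.some.inj h1
      have e : lquot w (u :: l) = (lquot w l).map (fun l' => u :: l') := by
        rw [lquot, if_neg h.1, if_pos (cm_symm h)]
      rw [e]
      refine ⟨fun h2 => by simpa using h2, fun l2 h2 => ?_⟩
      obtain ⟨l3, h3, rfl⟩ := Option.map_eq_some_iff.mp h2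
      exact ⟨l3, h3, lquot_cons_self _ _⟩
    · rw [lquot, if_neg huv] at h1
      by_cases hvu : cm v u
      · rw [if_pos hvu] at h1
        obtain ⟨m, hm, rfl⟩ := Option.map_eq_some_iff.mp h1
        by_cases huw : u = w
        · subst huw
          rw [lquot_cons_self, lquot_cons_self]
          refine ⟨fun h2 => by simp at h2, fun l2 h2 => ?_⟩
          obtain rfl := Option.some.inj h2
          exact ⟨m, rfl, hm⟩
        · rw [lquot, if_neg huw, lquot, if_neg huw]
          by_cases hwu : cm w u
          · rw [if_pos hwu, if_pos hwu]
            obtain ⟨k1, k2⟩ := ih m hm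
            refine ⟨fun h2 => ?_, fun l2 h2 => ?_⟩
            · rw [Option.map_eq_none_iff] at h2 ⊢
              exact k1 h2
            · obtain ⟨n, hn, rfl⟩ := Option.map_eq_some_iff.mp h2
              obtain ⟨l3, h3, h4⟩ := k2 n hn
              refine ⟨u :: l3, by rw [h3]; rfl, ?_⟩
              rw [lquot, if_neg huv, if_pos hvu, h4]; rfl
          · rw [if_neg hwu, if_neg hwu]
            exact ⟨fun _ => rfl, fun l2 h2 => by simp at h2⟩
      · rw [if_neg hvu] at h1; simp at h1

/-- The operator attached to a letter. -/
def Nfun (v : V) (h : List V → ℤ) (l : List V) : ℤ :=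
  match lquot v l with
  | none => 0
  | some l' => if lquot v l' = none then h l' else 0

lemma Nfun_none {v : V} {l : List V} (e : lquot v l = none) (h : List V → ℤ) :
    Nfun v h l = 0 := by simp [Nfun, e]

lemma Nfun_some {v : V} {l l' : List V} (e : lquot v l = some l') (h : List V → ℤ) :
    Nfun v h l = if lquot v l' = none then h l' else 0 := by simp [Nfun, e]

abbrev EE := Module.End ℤ (List V → ℤ)

def Nop (v : V) : EE where
  toFun := Nfun v
  map_add' a b := by
    ext l
    simp only [Nfun, Pi.add_apply]
    split
    · simp
    · split_ifs <;> simp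
  map_smul' c b := by
    ext l
    simp only [Nfun, Pi.smul_apply]
    split
    · simp
    · split_ifs <;> simp

lemma Nop_sq (v : V) : Nop v * Nop v = 0 := by
  apply LinearMap.ext; intro h; funext l
  change Nfun v (Nfun v h) l = 0
  rcases e : lquot v l with _ | l'
  · exact Nfun_none e _
  · rw [Nfun_some e]
    split_ifs with h1
    · exact Nfun_none h1 _
    · rfl

lemma Nfun_comm {v w : V} (hc : cm v w) (h : List V → ℤ) (l : List V) :
    Nfun v (Nfun w h) l = Nfun w (Nfun v h) l := by
  rcases e1 : lquot v l with _ | l1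
  · rw [Nfun_none e1]
    rcases e2 : lquot w l with _ | l2
    · rw [Nfun_none e2]
    · rw [Nfun_some e2, Nfun_none (((lquot_K (cm_symm hc)) l l2 e2).1 e1)]; simp
  · rcases e2 : lquot w l with _ | l2
    · rw [Nfun_none e2, Nfun_some e1, Nfun_none (((lquot_K hc) l l1 e1).1 e2)]; simp
    · obtain ⟨l3, h3, h4⟩ := (lquot_K hc l l1 e1).2 l2 e2
      rw [Nfun_some e1, Nfun_some e2, Nfun_some h3, Nfun_some h4]
      have a1 : lquot v l1 = none ↔ lquot v l3 = none := by
        obtain ⟨k1, k2⟩ := lquot_K (cm_symm hc) l1 l3 h3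
        refine ⟨k1, fun h5 => ?_⟩
        rcases e : lquot v l1 with _ | m
        · rfl
        · obtain ⟨_, h6, _⟩ := k2 m e
          rw [h5] at h6; simp at h6
      have a2 : lquot w l2 = none ↔ lquot w l3 = none := by
        obtain ⟨k1, k2⟩ := lquot_K hc l2 l3 h4
        refine ⟨k1, fun h5 => ?_⟩
        rcases e : lquot w l2 with _ | m
        · rfl
        · obtain ⟨_, h6, _⟩ := k2 m e
          rw [h5] at h6; simp at h6
      simp only [a1, a2]
      split_ifs <;> rfl

lemma Nop_comm {v w : V} (hc : cm v w) : Nop v * Nop w = Nop w * Nop v := by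
  apply LinearMap.ext; intro h; funext l
  exact Nfun_comm hc h l

def trep : T →* EE :=
  PresentedMonoid.lift (fun u => Nop u) (by
    rintro a b ⟨u, w, h, rfl, rfl⟩
    simp only [map_mul, FreeMonoid.lift_eval_of]
    exact Nop_comm h)

lemma trep_tof (u : V) : trep (tof u) = Nop u := rfl

def arep : A →+* EE := (MonoidAlgebra.lift ℤ EE T trep : A →ₐ[ℤ] EE)

lemma arep_ta (u : V) : arep (ta u) = Nop u := by
  change MonoidAlgebra.lift ℤ EE T trep (MonoidAlgebra.of ℤ T (tof u)) = _
  rw [MonoidAlgebra.lift_of, trep_tof]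

def prep : PS →+* PowerSeries EE := PowerSeries.map arep

lemma prep_U (u : V) : prep (U u : PS) = 1 + PowerSeries.C (Nop u) * PowerSeries.X := by
  simp [U, unitLin, lin, prep, arep_ta]

lemma prep_U_inv (u : V) : prep ((U u)⁻¹ : NN) = 1 + PowerSeries.C (-Nop u) * PowerSeries.X := by
  have h1 : prep (U u : PS) * prep ((U u)⁻¹ : NN) = 1 := by
    rw [← map_mul, Units.mul_inv, map_one]
  have h2 : (1 + PowerSeries.C (-Nop u) * PowerSeries.X) * prep (U u : PS) = 1 := by
    rw [prep_U]
    have : (PowerSeries.C (Nop u) * PowerSeries.X : PowerSeries EE) *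
        (PowerSeries.C (Nop u) * PowerSeries.X) = 0 := by
      rw [mul_assoc, ← mul_assoc PowerSeries.X, ← (PowerSeries.commute_X _).eq,
        mul_assoc, ← mul_assoc, ← map_mul, Nop_sq]
      simp
    rw [map_neg, neg_mul, add_mul, one_mul, mul_add, neg_mul, neg_mul, this]
    simp
  exact (left_inv_eq_right_inv h2 h1).symm

def Upm (p : V × Bool) : NN := if p.2 then U p.1 else (U p.1)⁻¹

def sg (b : Bool) : ℤ := if b then 1 else -1

lemma prep_Upm (p : V × Bool) : prep (Upm p : PS) =
    1 + PowerSeries.C (sg p.2 • Nop p.1) * PowerSeries.X := by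
  rcases p with ⟨v, _ | _⟩
  · simp [Upm, sg, prep_U_inv]
  · simp [Upm, sg, prep_U]

lemma prep_prod (l : List (V × Bool)) :
    (∀ k, l.length < k → PowerSeries.coeff k (prep ((l.map Upm).prod : NN)) = 0) ∧
    ∃ s : ℤ, s ≠ 0 ∧ PowerSeries.coeff l.length (prep ((l.map Upm).prod : NN)) =
      s • (l.map (fun p => Nop p.1)).prod := by
  induction l with
  | nil =>
    refine ⟨fun k hk => ?_, 1, one_ne_zero, ?_⟩
    · simp only [List.length_nil] at hk
      simp [PowerSeries.coeff_one, hk.ne']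
    · simp
  | cons p l ih =>
    obtain ⟨h1, s, hs, h2⟩ := ih
    have e : ∀ k, PowerSeries.coeff (k + 1) (prep (((p :: l).map Upm).prod : NN)) =
        PowerSeries.coeff (k + 1) (prep ((l.map Upm).prod : NN)) +
          (sg p.2 • Nop p.1) * PowerSeries.coeff k (prep ((l.map Upm).prod : NN)) := by
      intro k
      rw [List.map_cons, List.prod_cons, Units.val_mul, map_mul, prep_Upm, add_mul, one_mul,
        mul_assoc, map_add, PowerSeries.coeff_C_mul, PowerSeries.coeff_succ_X_mul]
    refine ⟨fun k hk => ?_, sg p.2 * s, ?_, ?_⟩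
    · obtain ⟨k, rfl⟩ : ∃ j, k = j + 1 := ⟨k - 1, by simp at hk; omega⟩
      simp only [List.length_cons] at hk
      rw [e, h1 _ (by omega), h1 _ (by omega)]; simp
    · refine mul_ne_zero ?_ hs
      rcases p with ⟨_, _ | _⟩ <;> simp [sg]
    · rw [List.length_cons, e, h1 _ (by omega), h2, zero_add, List.map_cons, List.prod_cons,
        smul_mul_smul_comm]

def Red : List V → Prop
  | [] => True
  | v :: l => lquot v l = none ∧ Red l

lemma Nop_prod_apply (l : List V) (h : Red l) :
    (l.map Nop).prod (fun m => if m = [] then 1 else 0) l = 1 := by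
  induction l with
  | nil => simp
  | cons v l ih =>
    rw [List.map_cons, List.prod_cons, Module.End.mul_apply]
    change Nfun v _ _ = 1
    rw [Nfun_some (lquot_cons_self v l), if_pos h.1]
    exact ih h.2

lemma Upm_prod_ne_one (l : List (V × Bool)) (hl : l ≠ []) (h : Red (l.map Prod.fst)) :
    (l.map Upm).prod ≠ 1 := by
  intro h1
  obtain ⟨-, s, hs, h2⟩ := prep_prod l
  rw [h1] at h2
  have h3 : PowerSeries.coeff l.length (prep ((1 : NN) : PS)) = 0 := by
    simp [PowerSeries.coeff_one, hl]
  rw [h3] at h2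
  have h4 := Nop_prod_apply _ h
  rw [List.map_map] at h4
  have h5 := congrFun (congrArg (fun L : EE => L (fun m => if m = [] then 1 else 0)) h2)
    (l.map Prod.fst)
  change (0 : ℤ) = s • ((l.map (Nop ∘ Prod.fst)).prod _ _) at h5
  rw [h4] at h5
  simp at h5
  exact hs h5.symm


/-! ### Edge values and the homomorphism to the semidirect product -/

/-- Value of an edge at the left end of a word. -/
def val0 (r : Rule) (q : Word) : FreeGroup Gen :=
  if h : q = [] then
    match r with
    | (.v, (.v, .v)) => X (.fam1 .vv)
    | (.v, (.v, .x)) => X (.fam1 .vx)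
    | (.v, (.x, .v)) => X (.fam1 .xv)
    | _ => 1
  else
    match r with
    | (.x, (.v, .v)) => X (.fam3 .xvv ⟨q, h⟩)
    | (.x, (.v, .x)) => X (.fam3 .xvx ⟨q, h⟩)
    | (.v, (.x, .x)) => X (.fam3 .vxx ⟨q, h⟩)
    | (.v, (.x, .v)) => X (.fam3 .vxv ⟨q, h⟩)
    | _ => 1

/-- Value of an edge. -/
def val (p : Word) (r : Rule) (q : Word) : FreeGroup Gen :=
  match p with
  | [] => val0 r q
  | a :: _ => X (.fam2 a r.1 r.2 q)

def tau : Word → TT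
  | [] => 1
  | [.x] => 1
  | [.v] => ev 0 (.x, (.x, .x)) * (ev 0 (.v, (.x, .x)))⁻¹
  | [y, z] => ev 0 (.x, (y, z))
  | y :: y' :: z :: q => tau (y :: z :: q) * ev 0 (y, (y, y'))

lemma tau_cons (y z : Letter) (q : Word) (hq : q ≠ []) :
    tau (y :: z :: q) = tau (y :: q) * ev 0 (y, (y, z)) := by
  cases q with
  | nil => exact absurd rfl hq
  | cons a q => simp only [tau]

def rG1 : G1 → Rule
  | .vv => (.v, (.v, .v))
  | .vx => (.v, (.v, .x))
  | .xv => (.v, (.x, .v))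

def rG3 : G3 → Rule
  | .xvv => (.x, (.v, .v))
  | .xvx => (.x, (.v, .x))
  | .vxx => (.v, (.x, .x))
  | .vxv => (.v, (.x, .v))

def cyc (p : Word) (r : Rule) (q : Word) : TT :=
  tau (p ++ [r.1] ++ q) * ev p.length r * (tau (p ++ tw r.2 ++ q))⁻¹

def gv : Gen → TT
  | .fam1 c => cyc [] (rG1 c) []
  | .fam2 a s t u => cyc [a] (s, t) u
  | .fam3 c u => cyc [] (rG3 c) u

lemma lift_X (g : Gen) : FreeGroup.lift gv (X g) = gv g := by simp [X]

lemma cyc_cons (a : Letter) (p : Word) (r : Rule) (q : Word) :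
    cyc (a :: p) r q = cyc [a] r q := by
  induction p with
  | nil => rfl
  | cons b p ih =>
    rw [← ih]
    simp only [cyc, List.cons_append, List.length_cons]
    rw [tau_cons a b _ (by simp), tau_cons a b _ (by simp [tw])]
    have := ev_comm (show 0 < p.length + 1 by omega) (a, (a, b)) r
    rw [mul_assoc (tau _), this]
    group

lemma lift_val (p : Word) (r : Rule) (q : Word) : FreeGroup.lift gv (val p r q) = cyc p r q := by
  cases p with
  | cons a p => rw [cyc_cons, val, lift_X]; rfl
  | nil =>
    obtain ⟨s, t1, t2⟩ := r
    by_cases h : q = []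
    · subst h
      cases s <;> cases t1 <;> cases t2 <;> simp [val, val0, lift_X, gv, rG1, cyc, tw, tau]
    · cases s <;> cases t1 <;> cases t2 <;> simp [val, val0, lift_X, gv, rG3, cyc, tw, tau_cons, h]

lemma cyc_square (p1 p2 q : Word) (r1 r2 : Rule) :
    cyc p1 r1 (p2 ++ [r2.1] ++ q) * cyc (p1 ++ tw r1.2 ++ p2) r2 q =
    cyc (p1 ++ [r1.1] ++ p2) r2 q * cyc p1 r1 (p2 ++ tw r2.2 ++ q) := by
  have := ev_comm (show p1.length < p1.length + 1 + p2.length by omega) r1 r2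
  have e : p1.length + 1 + p2.length + 1 = p1.length + 2 + p2.length := by ring
  rw [e] at this
  simp only [cyc, List.append_assoc, List.length_append, List.length_cons, List.length_nil, tw,
    zero_add, one_add_one_eq_two] at this ⊢
  simp only [← add_assoc] at this ⊢
  simp only [mul_assoc, inv_mul_cancel_left]
  rw [← mul_assoc (ev _ _), this]
  simp only [mul_assoc]

lemma lift_square (p1 p2 q : Word) (r1 r2 : Rule) :
    FreeGroup.lift gv (val p1 r1 (p2 ++ [r2.1] ++ q) * val (p1 ++ tw r1.2 ++ p2) r2 q *
    (val (p1 ++ [r1.1] ++ p2) r2 q * val p1 r1 (p2 ++ tw r2.2 ++ q))⁻¹) = 1 := by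
  rw [map_mul, map_mul, map_inv, map_mul, mul_inv_eq_one]
  simp only [lift_val]
  exact cyc_square p1 p2 q r1 r2

lemma lift_square' (p1 p2 q : Word) (r1 r2 : Rule) :
    FreeGroup.lift gv (val (p1 ++ [r1.1] ++ p2) r2 q * val p1 r1 (p2 ++ tw r2.2 ++ q) *
    (val p1 r1 (p2 ++ [r2.1] ++ q) * val (p1 ++ tw r1.2 ++ p2) r2 q)⁻¹) = 1 := by
  rw [map_mul, map_mul, map_inv, map_mul, mul_inv_eq_one]
  simp only [lift_val]
  exact (cyc_square p1 p2 q r1 r2).symm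

lemma val0_xvv (q : Word) (h : q ≠ []) : val [] (.x, (.v, .v)) q = X (.fam3 .xvv ⟨q, h⟩) := by
  simp [val, val0, h]
lemma val0_xvx (q : Word) (h : q ≠ []) : val [] (.x, (.v, .x)) q = X (.fam3 .xvx ⟨q, h⟩) := by
  simp [val, val0, h]
lemma val0_vxx (q : Word) (h : q ≠ []) : val [] (.v, (.x, .x)) q = X (.fam3 .vxx ⟨q, h⟩) := by
  simp [val, val0, h]
lemma val0_vxv (q : Word) (h : q ≠ []) : val [] (.v, (.x, .v)) q = X (.fam3 .vxv ⟨q, h⟩) := by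
  simp [val, val0, h]

lemma rels_lift (g : FreeGroup Gen) (hg : g ∈ VFrels) : FreeGroup.lift gv g = 1 := by
  rcases hg with ⟨a, s₁, s₂, t₁, t₂, p, q⟩ | ⟨s, t, p, q⟩ | ⟨s, t, p, q⟩ | ⟨s, t, p, q⟩ | ⟨s, t, p, q⟩
  · exact lift_square [a] p q (s₁, t₁) (s₂, t₂)
  · rw [← val0_xvv, ← val0_xvv]
    exact lift_square' [] p q (.x, (.v, .v)) (s, t)
  · rw [← val0_xvx, ← val0_xvx]
    exact lift_square' [] p q (.x, (.v, .x)) (s, t)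
  · rw [← val0_vxx, ← val0_vxx]
    exact lift_square' [] p q (.v, (.x, .x)) (s, t)
  · rw [← val0_vxv, ← val0_vxv]
    exact lift_square' [] p q (.v, (.x, .v)) (s, t)

def Phi : VF →* TT := PresentedGroup.toGroup rels_lift

def vm (p : Word) (r : Rule) (q : Word) : VF := PresentedGroup.mk VFrels (val p r q)

lemma Phi_vm (p : Word) (r : Rule) (q : Word) : Phi (vm p r q) = cyc p r q := lift_val p r q

lemma mk_rel (g h : FreeGroup Gen) (hg : VFRel (g * h⁻¹)) :
    PresentedGroup.mk VFrels g = PresentedGroup.mk VFrels h := by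
  have h1 : PresentedGroup.mk VFrels (g * h⁻¹) = 1 := PresentedGroup.one_of_mem hg
  rwa [map_mul, map_inv, mul_inv_eq_one] at h1

lemma vm_square (p1 p2 q : Word) (r1 r2 : Rule) :
    vm p1 r1 (p2 ++ [r2.1] ++ q) * vm (p1 ++ tw r1.2 ++ p2) r2 q =
    vm (p1 ++ [r1.1] ++ p2) r2 q * vm p1 r1 (p2 ++ tw r2.2 ++ q) := by
  simp only [vm, ← map_mul]
  cases p1 with
  | cons a p1 => exact mk_rel _ _ (VFRel.r12 a r1.1 r2.1 r1.2 r2.2 p2 q)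
  | nil =>
    obtain ⟨s, t1, t2⟩ := r1
    cases s <;> cases t1 <;> cases t2
    · simp [val, val0, tw]
    · simp [val, val0, tw]
    · rw [val0_xvx _ (by simp), val0_xvx _ (by simp [tw])]
      exact (mk_rel _ _ (VFRel.r4 r2.1 r2.2 p2 q)).symm
    · rw [val0_xvv _ (by simp), val0_xvv _ (by simp [tw])]
      exact (mk_rel _ _ (VFRel.r3 r2.1 r2.2 p2 q)).symm
    · rw [val0_vxx _ (by simp), val0_vxx _ (by simp [tw])]
      exact (mk_rel _ _ (VFRel.r5 r2.1 r2.2 p2 q)).symm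
    · rw [val0_vxv _ (by simp), val0_vxv _ (by simp [tw])]
      exact (mk_rel _ _ (VFRel.r6 r2.1 r2.2 p2 q)).symm
    · simp [val, val0, tw]
    · simp [val, val0, tw]

lemma tau_good : ∀ w, tau w ∈ Good
  | [] => by simp only [tau]; exact one_mem _
  | [.x] => by simp only [tau]; exact one_mem _
  | [.v] => by
    simp only [tau]
    exact mul_mem (ev_good _ _) (inv_mem (ev_good _ _))
  | [_, _] => by simp only [tau]; exact ev_good _ _
  | y :: _ :: z :: q => by
    simp only [tau]
    exact mul_mem (tau_good (y :: z :: q)) (ev_good _ _)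

lemma cyc_good (p : Word) (r : Rule) (q : Word) : cyc p r q ∈ Good :=
  mul_mem (mul_mem (tau_good _) (ev_good _ _)) (inv_mem (tau_good _))

lemma Phi_good (g : VF) : Phi g ∈ Good := by
  have h : ∀ g : FreeGroup Gen, FreeGroup.lift gv g ∈ Good := by
    intro g
    induction g with
    | C1 => rw [map_one]; exact one_mem _
    | of x =>
      rw [FreeGroup.lift_apply_of]
      cases x <;> exact cyc_good _ _ _
    | inv_of x hx => rw [map_inv]; exact inv_mem hx
    | mul x y hx hy => rw [map_mul]; exact mul_mem hx hy
  obtain ⟨g, rfl⟩ := PresentedGroup.mk_surjective VFrels g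
  exact h g


/-! ### Paths in the labelled Squier complex -/

structure Step where
  p : Word
  r : Rule
  q : Word
  b : Bool

def side (r : Rule) (b : Bool) : Word := if b then tw r.2 else [r.1]

def len (b : Bool) : ℕ := if b then 2 else 1

lemma side_length (r : Rule) (b : Bool) : (side r b).length = len b := by
  cases b <;> simp [side, len, tw]

lemma len_pos (b : Bool) : 0 < len b := by cases b <;> simp [len]

namespace Step

def src (e : Step) : Word := e.p ++ side e.r (!e.b) ++ e.q
def tgt (e : Step) : Word := e.p ++ side e.r e.b ++ e.q
def th (e : Step) : VF := if e.b then vm e.p e.r e.q else (vm e.p e.r e.q)⁻¹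
def evs (e : Step) : TT := if e.b then ev e.p.length e.r else (ev e.p.length e.r)⁻¹
def flip (e : Step) : Step := ⟨e.p, e.r, e.q, !e.b⟩

end Step

def dl (b : Bool) (i : ℕ) : Q := if b then (E i)⁻¹ else E i

def psi (b : Bool) (i : ℕ) (r : Rule) : V := if b then (ch i, r) else av (E i) (ch i, r)

def lett (f : Q) (e : Step) : V := av f (psi e.b e.p.length e.r)

def Path : Word → List Step → Word → Prop
  | w, [], w' => w = w'
  | w, e :: L, w' => e.src = w ∧ Path e.tgt L w'

def Th (L : List Step) : VF := (L.map Step.th).prod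

lemma Th_nil : Th [] = 1 := rfl
lemma Th_cons (e : Step) (L : List Step) : Th (e :: L) = e.th * Th L := by simp [Th]
lemma Th_append (L M : List Step) : Th (L ++ M) = Th L * Th M := by simp [Th]

lemma Path_append {w w' w'' : Word} {L M : List Step} (h : Path w L w') (h' : Path w' M w'') :
    Path w (L ++ M) w'' := by
  induction L generalizing w with
  | nil => cases h; exact h'
  | cons e L ih => exact ⟨h.1, ih h.2⟩

lemma flip_src (e : Step) : e.flip.src = e.tgt := by
  simp [Step.src, Step.flip, Step.tgt]
lemma flip_tgt (e : Step) : e.flip.tgt = e.src := by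
  simp [Step.src, Step.flip, Step.tgt]
lemma flip_th (e : Step) : e.flip.th = e.th⁻¹ := by
  rcases e with ⟨p, r, q, _ | _⟩ <;> simp [Step.flip, Step.th]

lemma Path_rev {w w' : Word} {L : List Step} (h : Path w L w') :
    ∃ M, Path w' M w ∧ Th M = (Th L)⁻¹ := by
  induction L generalizing w with
  | nil => cases h; exact ⟨[], rfl, by simp [Th_nil]⟩
  | cons e L ih =>
    obtain ⟨M, hM, hT⟩ := ih h.2
    refine ⟨M ++ [e.flip], Path_append hM ⟨flip_src e, ?_⟩, ?_⟩
    · rw [flip_tgt]; exact h.1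
    · rw [Th_append, Th_cons, Th_cons, Th_nil, flip_th, hT]; group

lemma Path_evs {w w' : Word} {L : List Step} (h : Path w L w') :
    Phi (Th L) = tau w * (L.map Step.evs).prod * (tau w')⁻¹ := by
  induction L generalizing w with
  | nil => cases h; simp [Th_nil]
  | cons e L ih =>
    have he : Phi e.th = tau e.src * e.evs * (tau e.tgt)⁻¹ := by
      rcases e with ⟨p, r, q, _ | _⟩
      · simp only [Step.th, Step.src, Step.tgt, Step.evs, side]
        simp only [Bool.false_eq_true, if_false, map_inv, Phi_vm, cyc, Bool.not_false, if_true]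
        group
      · simp only [Step.th, Step.src, Step.tgt, Step.evs, side]
        simp only [Bool.false_eq_true, if_false, Phi_vm, cyc, Bool.not_true, if_true]
    rw [Th_cons, map_mul, ih h.2, he, h.1, List.map_cons, List.prod_cons]
    group

/-- Letters of a path. -/
def vs (f : Q) : List Step → List (V × Bool)
  | [] => []
  | e :: L => (lett f e, e.b) :: vs (f * dl e.b e.p.length) L

lemma inr_ev (f : Q) (i : ℕ) (r : Rule) : (SemidirectProduct.inr f : TT) * ev i r =
    SemidirectProduct.inl (U (av f (ch i, r))) * SemidirectProduct.inr (f * (E i)⁻¹) := by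
  refine SemidirectProduct.ext ?_ ?_
  · simp [ev, nact_U]
  · simp [ev]

lemma inr_ev_inv (f : Q) (i : ℕ) (r : Rule) : (SemidirectProduct.inr f : TT) * (ev i r)⁻¹ =
    SemidirectProduct.inl (U (av f (av (E i) (ch i, r))))⁻¹ *
      SemidirectProduct.inr (f * E i) := by
  rw [mul_inv_eq_iff_eq_mul, mul_assoc, inr_ev, ← mul_assoc, ← map_mul, av_mul]
  simp

lemma inr_evs (f : Q) (e : Step) : (SemidirectProduct.inr f : TT) * e.evs =
    SemidirectProduct.inl (Upm (lett f e, e.b)) *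
      SemidirectProduct.inr (f * dl e.b e.p.length) := by
  rcases e with ⟨p, r, q, _ | _⟩
  · exact inr_ev_inv f _ _
  · exact inr_ev f _ _

lemma inr_evs_prod (f : Q) (L : List Step) :
    ((SemidirectProduct.inr f : TT) * (L.map Step.evs).prod).left = ((vs f L).map Upm).prod := by
  induction L generalizing f with
  | nil => simp [vs]
  | cons e L ih =>
    rw [List.map_cons, List.prod_cons, ← mul_assoc, inr_evs, mul_assoc, SemidirectProduct.mul_left,
      ih]
    simp [vs]

/-! ### Swapping -/

lemma th_square (p1 p2 q : Word) (r1 r2 : Rule) (b1 b2 : Bool) :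
    (Step.mk p1 r1 (p2 ++ side r2 (!b2) ++ q) b1).th * (Step.mk (p1 ++ side r1 b1 ++ p2) r2 q b2).th =
    (Step.mk (p1 ++ side r1 (!b1) ++ p2) r2 q b2).th *
      (Step.mk p1 r1 (p2 ++ side r2 b2 ++ q) b1).th := by
  have h := vm_square p1 p2 q r1 r2
  cases b1 <;> cases b2 <;>
    simp only [Step.th, side, Bool.not_true, Bool.not_false, if_true, if_false,
      Bool.false_eq_true]
  · rw [← mul_inv_rev, ← mul_inv_rev, h]
  · rw [inv_mul_eq_iff_eq_mul, ← mul_assoc, eq_mul_inv_iff_mul_eq, h]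
  · rw [mul_inv_eq_iff_eq_mul, mul_assoc, eq_inv_mul_iff_mul_eq, h]
  · exact h

lemma dl_square {i : ℕ} (k : ℕ) (b1 b2 : Bool) :
    dl b1 i * dl b2 (i + len b1 + k) = dl b2 (i + len (!b1) + k) * dl b1 i := by
  have h := E_comm (show i < i + 1 + k by omega)
  rw [show i + 1 + k + 1 = i + 2 + k by ring] at h
  have h' : (E (i + 1 + k))⁻¹ * (E i)⁻¹ = (E i)⁻¹ * (E (i + 2 + k))⁻¹ := by
    rw [← mul_inv_rev, ← mul_inv_rev, h]
  cases b1 <;> cases b2 <;>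
    simp only [dl, len, Bool.not_true, Bool.not_false, if_true, if_false, Bool.false_eq_true]
  · exact h.symm
  · rw [eq_inv_mul_iff_mul_eq, ← mul_assoc, mul_inv_eq_iff_eq_mul, h]
  · rw [inv_mul_eq_iff_eq_mul, ← mul_assoc, eq_mul_inv_iff_mul_eq, h]
  · exact h'.symm

lemma av_inv_eq {f : Q} {u w : V} (h : av f⁻¹ u = w) : av f w = u := by
  rw [← h, ← av_mul, mul_inv_cancel, av_one]

lemma psi_left {i : ℕ} (k : ℕ) (r : Rule) (b1 b2 : Bool) :
    av (dl b2 (i + len (!b1) + k)) (psi b1 i r) = psi b1 i r := by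
  cases b1
  · have h0 := ch_av_left (show i < i + 1 + k by omega) r
    have d := dl_square (i := i) k false b2
    simp only [dl, len, psi, Bool.not_false, if_true, if_false, Bool.false_eq_true] at d ⊢
    rw [← av_mul, ← d, av_mul]
    cases b2
    · simp only [Bool.false_eq_true, if_false]
      rw [av_inv_eq h0]
    · simp only [if_true]
      rw [h0]
  · have h0 := ch_av_left (show i < i + 1 + k by omega) r
    cases b2 <;> simp only [dl, len, psi, Bool.not_true, if_true, if_false, Bool.false_eq_true]
    · exact av_inv_eq h0
    · exact h0

lemma psi_right {i : ℕ} (k : ℕ) (r : Rule) (b1 b2 : Bool) :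
    av (dl b1 i) (psi b2 (i + len b1 + k) r) = psi b2 (i + len (!b1) + k) r := by
  have main : av (dl true i) (psi b2 (i + len true + k) r) = psi b2 (i + len (!true) + k) r := by
    have h0 := ch_av_right (show i < i + 1 + k by omega) r
    rw [show i + 1 + k + 1 = i + 2 + k by ring] at h0
    have d := dl_square (i := i) k true false
    simp only [dl, len, psi, Bool.not_true, if_true, if_false, Bool.false_eq_true] at d ⊢
    cases b2 <;> simp only [if_true, if_false, Bool.false_eq_true]
    · rw [← av_mul, d, av_mul, h0]
    · exact h0
  cases b1
  · exact av_inv_eq (f := E i) main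
  · exact main

/-- Letters seen from the middle word. -/
def mid (s : Bool) (i : ℕ) (r : Rule) : V := if s then av (E i) (ch i, r) else (ch i, r)

lemma lett_mid (f : Q) (e : Step) :
    lett f e = av (f * dl e.b e.p.length) (mid e.b e.p.length e.r) := by
  rcases e with ⟨p, r, q, _ | _⟩ <;> simp [lett, psi, dl, mid, av_mul]
  rw [← av_mul (E _)⁻¹, inv_mul_cancel, av_one]

lemma psi_mid (b : Bool) (i : ℕ) (r : Rule) : psi b i r = mid (!b) i r := by
  cases b <;> rfl

lemma mid_supp (s : Bool) (i : ℕ) (r : Rule) (t : ℝ) :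
    (0 < (mid s i r).1 t ∧ (mid s i r).1 t < 1) ↔ ((i : ℝ) < t ∧ t < i + len s) := by
  cases s
  · simp only [mid, len, if_false, Bool.false_eq_true, ch_apply, max_def, min_def, Nat.cast_one]
    constructor
    · rintro ⟨h1, h2⟩
      split_ifs at h1 h2 <;> constructor <;> linarith
    · rintro ⟨h1, h2⟩
      split_ifs <;> constructor <;> linarith
  · simp only [mid, len, if_true, av_fst, E_inv_apply, ch_apply, max_def, min_def, Nat.cast_ofNat]
    constructor
    · rintro ⟨h1, h2⟩
      split_ifs at h1 h2 <;> constructor <;> linarith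
    · rintro ⟨h1, h2⟩
      split_ifs <;> constructor <;> linarith

lemma mid_disj {s s' : Bool} {i j : ℕ} {r r' : Rule} (h : cm (mid s i r) (mid s' j r')) :
    i + len s ≤ j ∨ j + len s' ≤ i := by
  by_contra! hc
  obtain ⟨h1, h2⟩ := hc
  apply h.2 ((max i j : ℕ) + 1 / 2)
  rw [mid_supp, mid_supp]
  have e1 : ((max i j : ℕ) : ℝ) + 1 ≤ i + len s := by
    have : max i j + 1 ≤ i + len s := by have := len_pos s; omega
    exact_mod_cast this
  have e2 : ((max i j : ℕ) : ℝ) + 1 ≤ j + len s' := by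
    have : max i j + 1 ≤ j + len s' := by have := len_pos s'; omega
    exact_mod_cast this
  have e3 : (i : ℝ) ≤ (max i j : ℕ) := by exact_mod_cast le_max_left i j
  have e4 : (j : ℝ) ≤ (max i j : ℕ) := by exact_mod_cast le_max_right i j
  refine ⟨⟨?_, ?_⟩, ?_, ?_⟩ <;> linarith

lemma mid_eq {s s' : Bool} {i j : ℕ} {r r' : Rule} (h : mid s i r = mid s' j r') :
    s = s' ∧ i = j ∧ r = r' := by
  have hr : r = r' := by
    have := congrArg Prod.snd h
    cases s <;> cases s' <;> exact this
  have hs : ∀ t : ℝ, ((i : ℝ) < t ∧ t < i + len s) ↔ ((j : ℝ) < t ∧ t < j + len s') := by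
    intro t
    rw [← mid_supp s i r, ← mid_supp s' j r', h]
  have key : ∀ (s s' : Bool) (i j : ℕ),
      (∀ t : ℝ, ((i : ℝ) < t ∧ t < i + len s) → ((j : ℝ) < t ∧ t < j + len s')) →
      j ≤ i ∧ i + len s ≤ j + len s' := by
    intro s s' i j H
    have l1 : (1 : ℝ) ≤ len s := by exact_mod_cast len_pos s
    constructor
    · by_contra! hc
      have hc' : (i : ℝ) + 1 ≤ j := by exact_mod_cast hc
      have := H (i + 1 / 2) ⟨by linarith, by linarith⟩
      linarith
    · by_contra! hc
      have hc' : (j : ℝ) + len s' + 1 ≤ i + len s := by exact_mod_cast hc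
      have := H (i + len s - 1 / 2) ⟨by linarith, by linarith⟩
      linarith
  obtain ⟨a1, a2⟩ := key s s' i j fun t => (hs t).1
  obtain ⟨b1, b2⟩ := key s' s j i fun t => (hs t).2
  refine ⟨?_, by omega, hr⟩
  cases s <;> cases s' <;> simp [len] at a2 b2 ⊢ <;> omega

lemma split_left {p u q p' u' q' : Word} (h : p ++ u ++ q = p' ++ u' ++ q')
    (hl : p.length + u.length ≤ p'.length) : ∃ m, p' = p ++ u ++ m ∧ q = m ++ u' ++ q' := by
  rw [List.append_assoc p'] at h
  rcases List.append_eq_append_iff.mp h with ⟨m, h1, h2⟩ | ⟨m, h1, h2⟩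
  · exact ⟨m, h1, by rw [h2, List.append_assoc]⟩
  · have hm : m = [] := by
      have := congrArg List.length h1
      simp only [List.length_append] at this
      exact List.length_eq_zero_iff.mp (by omega)
    subst hm
    exact ⟨[], by simpa using h1.symm, by simpa using h2.symm⟩

lemma swap {w w2 : Word} {e m : Step} {f : Q} (h : Path w [e, m] w2)
    (hc : cm (lett f e) (lett (f * dl e.b e.p.length) m)) :
    ∃ m' e' : Step, Path w [m', e'] w2 ∧ m'.th * e'.th = e.th * m.th ∧
      dl m'.b m'.p.length * dl e'.b e'.p.length = dl e.b e.p.length * dl m.b m.p.length ∧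
      lett (f * dl m'.b m'.p.length) e' = lett f e := by
  rw [lett_mid f e, lett, psi_mid] at hc
  have hc' := cm_av (f * dl e.b e.p.length)⁻¹ hc
  simp only [← av_mul, inv_mul_cancel, av_one] at hc'
  obtain ⟨h1, h2, h3⟩ := h
  rcases e with ⟨p, r, q, b⟩
  rcases m with ⟨p', r', q', b'⟩
  simp only [Step.src, Step.tgt, Path] at h1 h2 h3 hc'
  rcases mid_disj hc' with hd | hd
  · obtain ⟨k, rfl, rfl⟩ := split_left h2.symm (by rw [side_length]; exact hd)
    refine ⟨⟨p ++ side r (!b) ++ k, r', q', b'⟩, ⟨p, r, k ++ side r' b' ++ q', b⟩,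
      ⟨?_, ?_, ?_⟩, (th_square _ _ _ _ _ _ _).symm, ?_, ?_⟩
    · simp only [Step.src, ← h1, List.append_assoc]
    · simp only [Step.src, Step.tgt, List.append_assoc]
    · simp only [Step.tgt, ← h3, List.append_assoc, Path]
    · simp only [List.length_append, side_length]
      exact (dl_square _ _ _).symm
    · simp only [lett, List.length_append, side_length, av_mul, psi_left]
  · obtain ⟨k, rfl, rfl⟩ := split_left h2 (by rw [side_length]; exact hd)
    refine ⟨⟨p', r', k ++ side r (!b) ++ q, b'⟩, ⟨p' ++ side r' b' ++ k, r, q, b⟩,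
      ⟨?_, ?_, ?_⟩, th_square _ _ _ _ _ _ _, ?_, ?_⟩
    · simp only [Step.src, ← h1, List.append_assoc]
    · simp only [Step.src, Step.tgt, List.append_assoc]
    · simp only [Step.tgt, ← h3, List.append_assoc, Path]
    · simp only [List.length_append, side_length]
      exact dl_square _ _ _
    · simp only [lett, List.length_append, side_length, av_mul, psi_right]

lemma cancel {w w2 : Word} {e m : Step} {f : Q} (h : Path w [e, m] w2)
    (hc : lett f e = lett (f * dl e.b e.p.length) m) : w = w2 ∧ e.th * m.th = 1 := by
  rw [lett_mid f e, lett, psi_mid] at hc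
  obtain ⟨a1, a2, a3⟩ := mid_eq (av_inj hc)
  obtain ⟨h1, h2, h3⟩ := h
  have hm : m = e.flip := by
    rcases e with ⟨p, r, q, b⟩
    rcases m with ⟨p', r', q', b'⟩
    simp only [Step.src, Step.tgt] at h2 a1 a2 a3
    subst a3 a1
    obtain ⟨h4, h5⟩ := List.append_inj h2 (by simp [a2])
    obtain ⟨h6, -⟩ := List.append_inj h4 a2.symm
    simp [Step.flip, h5, h6]
  subst hm
  rw [flip_tgt] at h3
  exact ⟨h1.symm.trans h3, by rw [flip_th, mul_inv_cancel]⟩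

lemma shorten {e : Step} {L : List Step} {w w' : Word} {f : Q} (h : Path w (e :: L) w')
    (hq : lquot (lett f e) ((vs (f * dl e.b e.p.length) L).map Prod.fst) ≠ none) :
    ∃ L', Path w L' w' ∧ Th L' = Th (e :: L) ∧ L'.length < L.length := by
  induction L generalizing e w f with
  | nil => simp [vs, lquot] at hq
  | cons m L ih =>
    obtain ⟨h1, h2, h3⟩ := h
    have hem : Path w [e, m] m.tgt := ⟨h1, h2, rfl⟩
    simp only [vs, List.map_cons, lquot] at hq
    split_ifs at hq with c1 c2
    · obtain ⟨k1, k2⟩ := cancel hem c1.symm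
      refine ⟨L, k1 ▸ h3, ?_, by simp⟩
      rw [Th_cons, Th_cons, ← mul_assoc, k2, one_mul]
    · obtain ⟨m', e', ⟨k1, k2, k3⟩, k4, k5, k6⟩ := swap hem c2
      have hq' : lquot (lett (f * dl m'.b m'.p.length) e')
          ((vs (f * dl m'.b m'.p.length * dl e'.b e'.p.length) L).map Prod.fst) ≠ none := by
        rw [k6, mul_assoc, k5, ← mul_assoc]
        intro h0
        rw [h0] at hq
        exact hq rfl
      have hp : Path m'.tgt (e' :: L) w' := ⟨k2, by
        have : e'.tgt = m.tgt := k3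
        rw [this]; exact h3⟩
      obtain ⟨L', a1, a2, a3⟩ := ih hp hq'
      refine ⟨m' :: L', ⟨k1, a1⟩, ?_, by simp; omega⟩
      rw [Th_cons, a2, Th_cons, Th_cons, Th_cons, ← mul_assoc, ← mul_assoc, k4]
    · exact absurd rfl hq

lemma shorten_of_not_red {L : List Step} {w w' : Word} {f : Q} (h : Path w L w')
    (hr : ¬ Red ((vs f L).map Prod.fst)) :
    ∃ L', Path w L' w' ∧ Th L' = Th L ∧ L'.length < L.length := by
  induction L generalizing w f with
  | nil => exact absurd trivial hr
  | cons e L ih =>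
    simp only [vs, List.map_cons, Red, not_and_or] at hr
    rcases hr with hr | hr
    · obtain ⟨L', h1, h2, h3⟩ := shorten h hr
      exact ⟨L', h1, h2, by simp; omega⟩
    · obtain ⟨L', h1, h2, h3⟩ := ih h.2 hr
      exact ⟨e :: L', ⟨h.1, h1⟩, by rw [Th_cons, Th_cons, h2], by simpa using h3⟩

/-! ### Surjectivity and injectivity -/

lemma conn (y : Letter) (q : Word) : ∃ L, Path [.x] L (y :: q) ∧ Th L = 1 := by
  match q with
  | [] =>
    cases y
    · exact ⟨[], rfl, rfl⟩
    · refine ⟨[⟨[], (.x, (.x, .x)), [], true⟩, ⟨[], (.v, (.x, .x)), [], false⟩], ⟨rfl, rfl, rfl⟩, ?_⟩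
      simp [Th, Step.th, vm, val, val0]
  | [z] =>
    refine ⟨[⟨[], (.x, (y, z)), [], true⟩], ⟨rfl, rfl⟩, ?_⟩
    simp [Th, Step.th, vm, val, val0]
  | z :: z' :: q =>
    obtain ⟨L, h1, h2⟩ := conn y (z' :: q)
    have h3 : Path (y :: z' :: q) [⟨[], (y, (y, z)), z' :: q, true⟩] (y :: z :: z' :: q) :=
      ⟨rfl, rfl⟩
    refine ⟨L ++ [⟨[], (y, (y, z)), z' :: q, true⟩], Path_append h1 h3, ?_⟩
    rw [Th_append, h2]
    cases y <;> cases z <;> simp [Th, Step.th, vm, val, val0]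

lemma conn' (w : Word) (hw : w ≠ []) : ∃ L, Path [.x] L w ∧ Th L = 1 := by
  cases w with
  | nil => exact absurd rfl hw
  | cons y q => exact conn y q

lemma loop_vm (p : Word) (r : Rule) (q : Word) :
    ∃ L, Path [.x] L [.x] ∧ Th L = vm p r q := by
  obtain ⟨L, h1, h2⟩ := conn' (p ++ side r false ++ q) (by simp [side])
  obtain ⟨M, h3, h4⟩ := conn' (p ++ side r true ++ q) (by simp [side, tw])
  obtain ⟨M', h5, h6⟩ := Path_rev h3
  refine ⟨L ++ ⟨p, r, q, true⟩ :: M', Path_append h1 ⟨rfl, h5⟩, ?_⟩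
  rw [Th_append, Th_cons, h2, h6, h4]
  simp [Step.th]

lemma gen_vm (g : Gen) : ∃ p r q, PresentedGroup.mk VFrels (FreeGroup.of g) = vm p r q := by
  rcases g with c | ⟨a, s, t, u⟩ | ⟨c, u, hu⟩
  · refine ⟨[], rG1 c, [], ?_⟩
    cases c <;> simp [vm, val, val0, rG1, X]
  · exact ⟨[a], (s, t), u, rfl⟩
  · refine ⟨[], rG3 c, u, ?_⟩
    cases c <;> simp [vm, val, val0, rG3, X, hu]

lemma loop_surj (g : VF) : ∃ L, Path [.x] L [.x] ∧ Th L = g := by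
  obtain ⟨g, rfl⟩ := PresentedGroup.mk_surjective VFrels g
  induction g with
  | C1 => exact ⟨[], rfl, by rw [map_one]; rfl⟩
  | of g =>
    obtain ⟨p, r, q, h⟩ := gen_vm g
    obtain ⟨L, h1, h2⟩ := loop_vm p r q
    exact ⟨L, h1, by rw [h2]; exact h.symm⟩
  | inv_of g hg =>
    obtain ⟨L, h1, h2⟩ := hg
    obtain ⟨M, h3, h4⟩ := Path_rev h1
    exact ⟨M, h3, by rw [h4, h2, map_inv]⟩
  | mul a b ha hb =>
    obtain ⟨L, h1, h2⟩ := ha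
    obtain ⟨M, h3, h4⟩ := hb
    exact ⟨L ++ M, Path_append h1 h3, by rw [Th_append, h2, h4, map_mul]⟩

lemma Phi_ker (g : VF) (h : Phi g = 1) : g = 1 := by
  have hex : ∃ n : ℕ, ∃ L, Path [.x] L [.x] ∧ Th L = g ∧ L.length = n := by
    obtain ⟨L, h1, h2⟩ := loop_surj g
    exact ⟨_, L, h1, h2, rfl⟩
  obtain ⟨L, h1, h2, h3⟩ := Nat.find_spec hex
  have hred : Red ((vs 1 L).map Prod.fst) := by
    by_contra hr
    obtain ⟨L', k1, k2, k3⟩ := shorten_of_not_red h1 hr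
    exact Nat.find_min hex (h3 ▸ k3) ⟨L', k1, k2.trans h2, rfl⟩
  have hprod : (L.map Step.evs).prod = 1 := by
    have := Path_evs h1
    rw [h2, h] at this
    have t : tau [.x] = 1 := by simp only [tau]
    rw [t] at this
    simpa using this.symm
  have hl : ((vs 1 L).map Upm).prod = 1 := by
    rw [← inr_evs_prod, hprod]; simp
  have hnil : vs 1 L = [] := by
    by_contra hne
    exact Upm_prod_ne_one _ hne hred hl
  cases L with
  | nil => rw [← h2]; rfl
  | cons e L => simp [vs] at hnil

lemma roots (a b : VF) (n : ℕ) (hn : 1 ≤ n) (h : a ^ n = b ^ n) : a = b := by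
  have h1 : Phi a = Phi b := by
    refine good_roots (Phi_good a) (Phi_good b) (n := n) hn ?_
    rw [← map_pow, ← map_pow, h]
  have h2 : a * b⁻¹ = 1 := Phi_ker _ (by rw [map_mul, map_inv, h1, mul_inv_cancel])
  exact mul_inv_eq_one.mp h2

end
end VFP

/-- VF has the unique extraction of roots property: for all a, b ∈ VF and n ≥ 1,
aⁿ = bⁿ implies a = b. -/
theorem VF_unique_extraction_of_roots (a b : VF) (n : ℕ) (hn : 1 ≤ n)
    (h : a ^ n = b ^ n) : a = b := by
  exact VFP.roots a b n hn h
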